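/- Let n ≡ s (mod 4) be a positive integer with s ∈ {1, −1}. Then, modulo Φ_n(−q)^3 Φ_n(q)^2, one has Σ_{k=0}^{(n−s)/4} (−1)^k · (1+q^{8k+s})(q^{2s};q^8)_k^3 / ((1+q^s)(q^8;q^8)_k^3) · q^{4k^2+2k(4−s)} ≡ (−1)^{(n−s)/4} · ([n]_{q^2}/[s]_{q^2}) · q^{(n−s)(n+s−4)/4} · Σ_{k=0}^{(n−s)/4} (q^{2s};q^8)_k^2 (q^4;q^8)_k / ((q^8, q^{4+s}, q^{8+s}; q^8)_k) · q^{2k(4−s)}. -/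

import Mathlib

open Finset Polynomial

/-- The q-shifted factorial `(x; q)_k = ∏_{j=0}^{k-1} (1 - x q^j)`. -/
noncomputable def qPoch (x q : RatFunc ℚ) (k : ℕ) : RatFunc ℚ :=
  ∏ j ∈ Finset.range k, (1 - x * q ^ j)

/-- The q-integer `[m]_q = (1 - q^m)/(1 - q)` (with integer `m`). -/
noncomputable def qInt (q : RatFunc ℚ) (m : ℤ) : RatFunc ℚ :=
  (1 - q ^ m) / (1 - q)


section helpers

/-- q-shifted factorial in a general commutative ring. -/
def qp {R : Type*} [CommRing R] (x Q : R) (k : ℕ) : R := ∏ j ∈ Finset.range k, (1 - x * Q ^ j)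

/-- Gaussian binomials, via the q-Pascal recurrence. -/
def gb {R : Type*} [CommRing R] (Q : R) : ℕ → ℕ → R
  | _, 0 => 1
  | 0, _ + 1 => 0
  | M + 1, j + 1 => Q ^ (j + 1) * gb Q M (j + 1) + gb Q M j

variable {R : Type*} [CommRing R]

lemma qp_zero (x Q : R) : qp x Q 0 = 1 := by simp [qp]

lemma qp_succ (x Q : R) (k : ℕ) : qp x Q (k + 1) = qp x Q k * (1 - x * Q ^ k) := by
  simp [qp, Finset.prod_range_succ]

lemma qp_add (x Q : R) (k l : ℕ) : qp x Q (k + l) = qp x Q k * qp (x * Q ^ k) Q l := by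
  simp only [qp, Finset.prod_range_add]
  congr 1
  refine Finset.prod_congr rfl fun j _ => ?_
  ring

lemma qp_succ' (x Q : R) (k : ℕ) : qp x Q (k + 1) = (1 - x) * qp (x * Q) Q k := by
  rw [add_comm, qp_add]; simp [qp]

lemma gb_zero (Q : R) (M : ℕ) : gb Q M 0 = 1 := by cases M <;> rfl

lemma gb_succ (Q : R) (M j : ℕ) :
    gb Q (M + 1) (j + 1) = Q ^ (j + 1) * gb Q M (j + 1) + gb Q M j := rfl

lemma gb_lt (Q : R) (M j : ℕ) (h : M < j) : gb Q M j = 0 := by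
  induction M generalizing j with
  | zero => cases j with
    | zero => omega
    | succ j => rfl
  | succ M ih => cases j with
    | zero => omega
    | succ j => rw [gb_succ, ih _ (by omega), ih _ (by omega)]; ring

lemma gb_self (Q : R) (M : ℕ) : gb Q M M = 1 := by
  induction M with
  | zero => rfl
  | succ M ih => rw [gb_succ, ih, gb_lt _ _ _ (by omega)]; ring

lemma gb_ratio (Q : R) (j e : ℕ) :
    gb Q (j + e) (j + 1) * (1 - Q ^ (j + 1)) = (1 - Q ^ e) * gb Q (j + e) j := by
  induction j generalizing e with
  | zero =>
    simp only [Nat.zero_add, gb_zero]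
    induction e with
    | zero => simp [gb]
    | succ e ih => rw [gb_succ, gb_zero]; linear_combination Q * ih
  | succ j ihj =>
    induction e with
    | zero => rw [gb_lt _ _ _ (by omega)]; simp
    | succ e ih =>
      have e1 : j + 1 + (e + 1) = (j + 1 + e) + 1 := by omega
      have h1 := ihj (e + 1)
      have e2 : j + (e + 1) = j + 1 + e := by omega
      rw [e2] at h1
      rw [e1, gb_succ, gb_succ Q (j+1+e) j]
      have h2 := ih
      linear_combination (Q ^ (j+2)) * h2 + Q^0 * h1

lemma gb_mul (Q : R) (j e : ℕ) :
    gb Q (j + e) j * (qp Q Q j * qp Q Q e) = qp Q Q (j + e) := by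
  induction j generalizing e with
  | zero => simp [gb_zero, qp_zero]
  | succ j ih =>
    have h := ih (e + 1)
    have e2 : j + (e + 1) = j + 1 + e := by omega
    have h1 := gb_ratio Q j (e + 1)
    rw [e2] at h h1
    rw [← h, qp_succ, qp_succ Q Q e]
    linear_combination (qp Q Q j * qp Q Q e) * h1

/-- q-Chu-Vandermonde. -/
lemma qCV (Q A : R) (M : ℕ) : ∀ D : R,
    ∑ j ∈ range (M + 1), gb Q M j * (-D) ^ j * Q ^ (j.choose 2) * qp A Q j *
      qp (A * D * Q ^ j) Q (M - j) = qp D Q M := by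
  induction M with
  | zero => intro D; simp [gb, qp]
  | succ M ih =>
    intro D
    rw [qp_succ', ← ih (D * Q), Finset.mul_sum]
    have key : ∀ j ∈ range (M + 2), gb Q (M+1) j * (-D) ^ j * Q ^ (j.choose 2) * qp A Q j *
      qp (A * D * Q ^ j) Q (M + 1 - j) = (gb Q M j * (-D) ^ j * Q ^ (j.choose 2) * qp A Q j *
      Q ^ j * qp (A * D * Q ^ j) Q (M + 1 - j)) + (if j = 0 then 0 else gb Q M (j - 1) * (-D) ^ j * Q ^ (j.choose 2) * qp A Q j *
      qp (A * D * Q ^ j) Q (M + 1 - j)) := by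
      intro j _
      cases j with
      | zero => simp [gb_zero]
      | succ j => rw [gb_succ]; simp; ring
    rw [Finset.sum_congr rfl key, Finset.sum_add_distrib, Finset.sum_range_succ,
      gb_lt Q M (M+1) (by omega), Finset.sum_range_succ' _ (M + 1)]
    simp only [Nat.add_eq_zero_iff, one_ne_zero, and_false, if_false, if_true, add_zero, zero_mul,
      Nat.add_sub_cancel]
    rw [← Finset.sum_add_distrib]
    refine Finset.sum_congr rfl fun j hj => ?_
    have hj' : j ≤ M := by simp at hj; omega
    obtain ⟨e, rfl⟩ := Nat.exists_eq_add_of_le hj'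
    have e1 : j + e + 1 - j = e + 1 := by omega
    have e2 : j + e - j = e := by omega
    have e3 : j + e + 1 - (j + 1) = e := by omega
    rw [e1, e2, e3, qp_succ', qp_succ, Nat.choose_succ_succ' j 1, Nat.choose_one_right]
    have e4 : A * D * Q ^ j * Q = A * (D * Q) * Q ^ j := by ring
    have e5 : A * D * Q ^ (j + 1) = A * (D * Q) * Q ^ j := by ring
    rw [e4, e5, show -(D * Q) = (-D) * Q by ring, mul_pow]
    ring

end helpers
section pair
variable {K : Type*} [Field K]

/-- summand in the Bailey pair identity -/
def bpU (p b : K) (m r : ℕ) : K :=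
  (-1) ^ r * (1 + p ^ (2 * r) * b) * qp (b ^ 2) (p ^ 2) r * p ^ (r ^ 2) * gb (p ^ 2) m r /
    qp (b ^ 2 * p ^ 2) (p ^ 2) (m + r)

/-- WZ mate, shifted by one -/
def bpG (p b : K) (m r : ℕ) : K :=
  (-1) ^ (r + 1) * qp (b ^ 2) (p ^ 2) (r + 1) * p ^ (r ^ 2 + 1) * p ^ (2 * m) *
    (b * p * p ^ (2 * r) - 1) * gb (p ^ 2) m r /
    (qp (b ^ 2 * p ^ 2) (p ^ 2) (m + r + 1) * (1 - p ^ (2 * m + 1)))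

lemma bp_step (p b : K) (hp : ∀ i : ℕ, 1 ≤ i → 1 - p ^ i ≠ 0)
    (hb2 : ∀ i : ℕ, 1 - b ^ 2 * p ^ (2 * i) ≠ 0) (hq : ∀ k : ℕ, qp (b ^ 2 * p ^ 2) (p ^ 2) k ≠ 0)
    (t e : ℕ) :
    (1 - p ^ (2 * (t + e) + 1) * b) * (1 - p ^ (2 * (t + e) + 2) * b) / (1 - p ^ (2 * (t + e) + 1)) *
      bpU p b (t + e + 1) (t + 1) - bpU p b (t + e) (t + 1)
      = bpG p b (t + e) (t + 1) - bpG p b (t + e) t := by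
  have h1 := gb_ratio (p ^ 2) t e
  have hn : 1 - (p ^ 2) ^ (t + 1) ≠ 0 := by rw [← pow_mul]; exact hp _ (by omega)
  obtain ⟨h, hh⟩ : ∃ h, gb (p ^ 2) (t + e) t = (1 - (p ^ 2) ^ (t + 1)) * h :=
    ⟨gb (p ^ 2) (t + e) t / (1 - (p ^ 2) ^ (t + 1)), by field_simp⟩
  have h2 : gb (p ^ 2) (t + e) (t + 1) = (1 - (p ^ 2) ^ e) * h := by
    apply mul_right_cancel₀ hn
    rw [h1, hh]; ring
  unfold bpU bpG
  rw [gb_succ, hh, h2]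
  rw [show t + e + 1 + (t + 1) = (t + e + t + 1) + 1 by ring,
    show t + e + (t + 1) + 1 = (t + e + t + 1) + 1 by ring,
    show t + e + (t + 1) = (t + e + t + 1) by ring]
  rw [qp_succ (b ^ 2) _ (t+1), qp_succ (b ^ 2 * p ^ 2) _ (t + e + t + 1)]
  have hA := hq (t + e + t + 1)
  have hB := hb2 (t + e + t + 2)
  have hC := hp (2 * (t + e) + 1) (by omega)
  have hB' : 1 - b ^ 2 * p ^ 2 * (p ^ 2) ^ (t + e + t + 1) ≠ 0 := by
    convert hB using 2; ring
  generalize qp (b ^ 2 * p ^ 2) (p ^ 2) (t + e + t + 1) = A at *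
  generalize qp (b ^ 2) (p ^ 2) (t + 1) = B at *
  rw [show p ^ ((t + 1) ^ 2 + 1) = p ^ (t ^ 2) * (p ^ t) ^ 2 * p ^ 2 by ring,
    show p ^ ((t + 1) ^ 2) = p ^ (t ^ 2) * (p ^ t) ^ 2 * p by ring,
    show p ^ (t ^ 2 + 1) = p ^ (t ^ 2) * p by ring]
  rw [show 1 - b ^ 2 * p ^ 2 * (p ^ 2) ^ (t + e + t + 1) = 1 - b ^ 2 * p ^ 4 * (p^t) ^ 4 * (p ^ e) ^ 2 by ring] at *
  rw [show 1 - p ^ (2 * (t + e) + 1) = 1 - p * (p ^ t) ^ 2 * (p ^ e) ^ 2 by ring] at *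
  rw [show p ^ (2 * (t + e) + 1) = p * (p ^ t) ^ 2 * (p ^ e) ^ 2 by ring,
    show p ^ (2 * (t + e) + 2) = p ^ 2 * (p ^ t) ^ 2 * (p ^ e) ^ 2 by ring,
    show p ^ (2 * (t + e)) = (p ^ t) ^ 2 * (p ^ e) ^ 2 by ring,
    show p ^ (2 * (t + 1)) = (p ^ t) ^ 2 * p ^ 2 by ring,
    show p ^ (2 * t) = (p ^ t) ^ 2 by ring,
    show (p ^ 2) ^ (t + 1) = (p ^ t) ^ 2 * p ^ 2 by ring,
    show (p ^ 2) ^ e = (p ^ e) ^ 2 by ring,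
    show (-1 : K) ^ (t + 1 + 1) = (-1) ^ t by ring,
    show (-1 : K) ^ (t + 1) = -(-1) ^ t by ring]
  generalize p ^ (t ^ 2) = Z
  generalize (-1 : K) ^ t = sg
  generalize p ^ t = x at *
  generalize p ^ e = y at *
  clear hh h2 h1 hn hB hp hb2 hq
  generalize hW : 1 - b ^ 2 * p ^ 4 * x ^ 4 * y ^ 2 = W at *
  generalize hV : 1 - p * x ^ 2 * y ^ 2 = V at *
  field_simp
  subst hW hV
  ring

lemma bp_step0 (p b : K) (hp : ∀ i : ℕ, 1 ≤ i → 1 - p ^ i ≠ 0)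
    (hb2 : ∀ i : ℕ, 1 - b ^ 2 * p ^ (2 * i) ≠ 0) (hq : ∀ k : ℕ, qp (b ^ 2 * p ^ 2) (p ^ 2) k ≠ 0)
    (m : ℕ) :
    (1 - p ^ (2 * m + 1) * b) * (1 - p ^ (2 * m + 2) * b) / (1 - p ^ (2 * m + 1)) *
      bpU p b (m + 1) 0 - bpU p b m 0 = bpG p b m 0 := by
  unfold bpU bpG
  simp only [gb_zero, qp_zero, qp_succ, add_zero]
  have hA := hq m
  have hB := hb2 (m + 1)
  have hC := hp (2 * m + 1) (by omega)
  have hB' : 1 - b ^ 2 * p ^ 2 * (p ^ 2) ^ m ≠ 0 := by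
    convert hB using 2; ring
  generalize qp (b ^ 2 * p ^ 2) (p ^ 2) m = A at *
  rw [show 1 - b ^ 2 * p ^ 2 * (p ^ 2) ^ m = 1 - b ^ 2 * p ^ 2 * (p ^ m) ^ 2 by ring] at *
  rw [show 1 - p ^ (2 * m + 1) = 1 - p * (p ^ m) ^ 2 by ring] at *
  rw [show p ^ (2 * m + 1) = p * (p ^ m) ^ 2 by ring,
    show p ^ (2 * m + 2) = p ^ 2 * (p ^ m) ^ 2 by ring,
    show p ^ (2 * m) = (p ^ m) ^ 2 by ring]
  clear hB hp hb2 hq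
  generalize p ^ m = y at *
  generalize hW : 1 - b ^ 2 * p ^ 2 * y ^ 2 = W at *
  generalize hV : 1 - p * y ^ 2 = V at *
  field_simp
  subst hW hV
  ring

lemma bp_sum (p b : K) (hp : ∀ i : ℕ, 1 ≤ i → 1 - p ^ i ≠ 0)
    (hb2 : ∀ i : ℕ, 1 - b ^ 2 * p ^ (2 * i) ≠ 0) (hq : ∀ k : ℕ, qp (b ^ 2 * p ^ 2) (p ^ 2) k ≠ 0)
    (m : ℕ) :
    (∑ r ∈ range (m + 1), bpU p b m r) * qp (p * b) p (2 * m) = (1 + b) * qp p (p ^ 2) m := by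
  induction m with
  | zero => simp [bpU, qp, gb]
  | succ m ih =>
    have key : (1 - p ^ (2 * m + 1) * b) * (1 - p ^ (2 * m + 2) * b) / (1 - p ^ (2 * m + 1)) *
        (∑ r ∈ range (m + 2), bpU p b (m + 1) r) - ∑ r ∈ range (m + 2), bpU p b m r = 0 := by
      rw [Finset.mul_sum, ← Finset.sum_sub_distrib, Finset.sum_range_succ', bp_step0 p b hp hb2 hq]
      rw [Finset.sum_congr rfl (g := fun t => bpG p b m (t + 1) - bpG p b m t)]
      · rw [Finset.sum_range_sub]
        have : bpG p b m (m + 1) = 0 := by unfold bpG; rw [gb_lt _ _ _ (by omega)]; simp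
        rw [this]; ring
      · intro t ht
        obtain ⟨e, rfl⟩ := Nat.exists_eq_add_of_le (show t ≤ m by simp at ht; omega)
        exact bp_step p b hp hb2 hq t e
    have hz : bpU p b m (m + 1) = 0 := by unfold bpU; rw [gb_lt _ _ _ (by omega)]; simp
    rw [Finset.sum_range_succ (bpU p b m) (m + 1), hz, add_zero] at key
    have hC := hp (2 * m + 1) (by omega)
    rw [show 2 * (m + 1) = 2 * m + 1 + 1 by ring, qp_succ, qp_succ, qp_succ]
    have e1 : p * b * p ^ (2 * m) = p ^ (2 * m + 1) * b := by ring
    have e2 : p * b * p ^ (2 * m + 1) = p ^ (2 * m + 2) * b := by ring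
    have e3 : p * (p ^ 2) ^ m = p ^ (2 * m + 1) := by ring
    rw [e1, e2, e3]
    have key2 : (1 - p ^ (2 * m + 1) * b) * (1 - p ^ (2 * m + 2) * b) *
        (∑ r ∈ range (m + 2), bpU p b (m + 1) r) = (∑ r ∈ range (m + 1), bpU p b m r) *
          (1 - p ^ (2 * m + 1)) := by
      field_simp at key
      linear_combination key
    linear_combination qp (p * b) p (2 * m) * key2 + (1 - p ^ (2 * m + 1)) * ih

end pair
section watson
variable {K : Type*} [Field K]

/-- terminating weight -/
def wV (Q D : K) (N k : ℕ) : K :=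
  (-D) ^ k * Q ^ (k.choose 2) * qp Q Q N / qp Q Q (N - k)

lemma choose_two_add (r j : ℕ) : (r + j).choose 2 = r.choose 2 + j.choose 2 + r * j := by
  induction j with
  | zero => simp
  | succ j ih =>
    rw [← add_assoc, Nat.choose_succ_succ' (r + j) 1, Nat.choose_succ_succ' j 1, ih]
    simp; ring

lemma bailey_core (Q a D ρ : K) (N : ℕ) (hρ : ρ * D = a * Q) (hQ : ∀ k, qp Q Q k ≠ 0)
    (ha : ∀ k, qp (a * Q) Q k ≠ 0) (hD : ∀ k, k ≤ N → qp D Q k ≠ 0) (r : ℕ) (hr : r ≤ N) :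
    ∑ k ∈ Ico r (N + 1), qp ρ Q k * wV Q D N k / (qp Q Q (k - r) * qp (a * Q) Q (k + r)) =
      qp D Q N / qp (a * Q) Q N *
        (qp ρ Q r * wV Q D N r / (qp D Q r * qp (a * Q * Q ^ N) Q r)) := by
  obtain ⟨M, rfl⟩ := Nat.exists_eq_add_of_le hr
  rw [Finset.sum_Ico_eq_sum_range]
  have e0 : r + M + 1 - r = M + 1 := by omega
  rw [e0]
  have cv := qCV Q (ρ * Q ^ r) M (D * Q ^ r)
  have hterm : ∀ j ∈ range (M + 1),
      qp ρ Q (r + j) * wV Q D (r + M) (r + j) / (qp Q Q (r + j - r) * qp (a * Q) Q (r + j + r)) =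
      (qp ρ Q r * (-D) ^ r * Q ^ (r.choose 2) * qp Q Q (r + M) /
        (qp (a * Q) Q (r + M + r) * qp Q Q M)) *
      (gb Q M j * (-(D * Q ^ r)) ^ j * Q ^ (j.choose 2) * qp (ρ * Q ^ r) Q j *
      qp (ρ * Q ^ r * (D * Q ^ r) * Q ^ j) Q (M - j)) := by
    intro j hj
    obtain ⟨e, rfl⟩ := Nat.exists_eq_add_of_le (show j ≤ M by simp at hj; omega)
    have h1 : r + j - r = j := by omega
    have h2 : r + (j + e) - (r + j) = e := by omega
    have h3 : j + e - j = e := by omega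
    unfold wV
    rw [h1, h2, h3, qp_add ρ Q r j, choose_two_add]
    have h4 : qp (a * Q) Q (r + (j + e) + r) = qp (a * Q) Q (r + j + r) *
        qp (ρ * Q ^ r * (D * Q ^ r) * Q ^ j) Q e := by
      rw [show r + (j + e) + r = (r + j + r) + e by ring, qp_add]
      congr 2
      linear_combination (-Q ^ (r + j + r)) * hρ
    have h5 := gb_mul Q j e
    have n1 := ha (r + (j + e) + r)
    rw [h4] at n1 ⊢
    have n2 := left_ne_zero_of_mul n1
    have n3 := right_ne_zero_of_mul n1
    have n4 := hQ j
    have n5 := hQ e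
    have n6 := hQ (j + e)
    rw [← h5] at n6 ⊢
    have n7 := left_ne_zero_of_mul n6
    rw [show (-(D * Q ^ r)) ^ j = (-D) ^ j * Q ^ (r * j) by rw [pow_mul, ← mul_pow]; ring]
    rw [pow_add, pow_add, pow_add]
    generalize qp (ρ * Q ^ r * (D * Q ^ r) * Q ^ j) Q e = Y at *
    field_simp
  rw [Finset.sum_congr rfl hterm, ← Finset.mul_sum, cv]
  unfold wV
  have h2 : r + M - r = M := by omega
  rw [h2]
  have g1 := ha (r + M + r)
  have g2 := hD (r + M) le_rfl
  rw [qp_add _ _ (r + M) r] at g1 ⊢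
  have g3 := left_ne_zero_of_mul g1
  have g4 := right_ne_zero_of_mul g1
  rw [qp_add _ _ r M] at g2 
  rw [qp_add D _ r M]
  have g5 := left_ne_zero_of_mul g2
  have g6 := right_ne_zero_of_mul g2
  have g7 := hQ M
  field_simp

lemma watson (Q a D ρ : K) (N : ℕ) (hρ : ρ * D = a * Q) (hQ : ∀ k, qp Q Q k ≠ 0)
    (ha : ∀ k, qp (a * Q) Q k ≠ 0) (hD : ∀ k, k ≤ N → qp D Q k ≠ 0) (al be : ℕ → K)
    (hbe : ∀ k, be k = ∑ r ∈ range (k + 1), al r / (qp Q Q (k - r) * qp (a * Q) Q (k + r))) :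
    ∑ k ∈ range (N + 1), qp ρ Q k * wV Q D N k * be k = qp D Q N / qp (a * Q) Q N *
      ∑ r ∈ range (N + 1), al r * (qp ρ Q r * wV Q D N r / (qp D Q r * qp (a * Q * Q ^ N) Q r)) := by
  simp only [hbe, Finset.mul_sum]
  rw [Finset.sum_comm' (t' := range (N + 1)) (s' := fun r => Ico r (N + 1))]
  · refine Finset.sum_congr rfl fun r hr => ?_
    have := bailey_core Q a D ρ N hρ hQ ha hD r (by simp at hr; omega)
    rw [mul_left_comm, ← this, Finset.mul_sum]
    refine Finset.sum_congr rfl fun k _ => ?_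
    ring
  · intro x y; simp; omega

lemma be_eq (p b : K) (hp : ∀ i : ℕ, 1 ≤ i → 1 - p ^ i ≠ 0)
    (hb2 : ∀ i : ℕ, 1 - b ^ 2 * p ^ (2 * i) ≠ 0) (hQ : ∀ k, qp (p ^ 2) (p ^ 2) k ≠ 0)
    (hq : ∀ k : ℕ, qp (b ^ 2 * p ^ 2) (p ^ 2) k ≠ 0)
    (hb1 : ∀ k : ℕ, qp (p * b) p k ≠ 0) (hb : 1 + b ≠ 0) (k : ℕ) :
    qp p (p ^ 2) k / (qp (p ^ 2) (p ^ 2) k * qp (p * b) p (2 * k)) =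
    ∑ r ∈ range (k + 1), ((-1) ^ r * (1 + p ^ (2 * r) * b) / (1 + b) * qp (b ^ 2) (p ^ 2) r /
      qp (p ^ 2) (p ^ 2) r * p ^ (r ^ 2)) /
      (qp (p ^ 2) (p ^ 2) (k - r) * qp (b ^ 2 * p ^ 2) (p ^ 2) (k + r)) := by
  have h := bp_sum p b hp hb2 hq k
  have h1 := hQ k
  have h2 := hb1 (2 * k)
  have h3 : ∑ r ∈ range (k + 1), ((-1) ^ r * (1 + p ^ (2 * r) * b) / (1 + b) * qp (b ^ 2) (p ^ 2) r /
      qp (p ^ 2) (p ^ 2) r * p ^ (r ^ 2)) /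
      (qp (p ^ 2) (p ^ 2) (k - r) * qp (b ^ 2 * p ^ 2) (p ^ 2) (k + r)) =
      ∑ r ∈ range (k + 1), (1 / ((1 + b) * qp (p ^ 2) (p ^ 2) k)) * bpU p b k r := by
    refine Finset.sum_congr rfl fun r hr => ?_
    obtain ⟨e, rfl⟩ := Nat.exists_eq_add_of_le (show r ≤ k by simp at hr; omega)
    have h3 : r + e - r = e := by omega
    rw [h3]
    have h5 := gb_mul (p ^ 2) r e
    unfold bpU
    have n4 := hQ r
    have n5 := hQ e
    have n6 := hQ (r + e)
    have n8 := hq (r + e + r)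
    rw [← h5] at n6 ⊢
    have n7 := left_ne_zero_of_mul n6
    field_simp
  rw [h3, ← Finset.mul_sum]
  field_simp
  linear_combination -h

end watson
section pairing
variable {R : Type*} [CommRing R]

/-- numerator product -/
def pA (p b u : R) (k : ℕ) : R :=
  ∏ j ∈ range k, (1 - u * (b ^ 2 * p ^ (2 * j)) + (b ^ 2 * p ^ (2 * j)) ^ 2)

/-- complementary denominator product -/
def pB (p u : R) (N k : ℕ) : R :=
  ∏ j ∈ Ico k N, (1 - u * p ^ (2 * j + 2) + (p ^ (2 * j + 2)) ^ 2)

/-- complementary q-factorial -/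
def pC (p : R) (N k : ℕ) : R := ∏ j ∈ Ico k N, (1 - p ^ (2 * j + 2))

/-- cleared left-hand summand -/
def fT (p b u : R) (N k : ℕ) : R :=
  (-1) ^ k * (1 + p ^ (2 * k) * b) * qp (b ^ 2) (p ^ 2) k * pC p N k * p ^ (k ^ 2 + 2 * k) *
    b ^ (2 * (N - k)) * (pA p b u k * pB p u N k)

/-- cleared left-hand sum -/
def FF (p b u : R) (N : ℕ) : R := ∑ k ∈ range (N + 1), fT p b u N k

lemma map_FF {T : Type*} [CommRing T] (f : R →+* T) (p b u : R) (N : ℕ) :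
    f (FF p b u N) = FF (f p) (f b) (f u) N := by
  simp [FF, fT, pA, pB, pC, qp, map_sum, map_prod]

lemma prod_refl (f : ℕ → R) (k m : ℕ) :
    ∏ j ∈ range k, f (k + m - j) = ∏ j ∈ Ico m (k + m), f (j + 1) := by
  rw [Finset.prod_Ico_eq_prod_range, ← Finset.prod_range_reflect]
  have : k + m - m = k := by omega
  rw [this]
  refine Finset.prod_congr rfl fun j hj => ?_
  congr 1
  simp at hj; omega

lemma prod_scal (p b : R) (k : ℕ) :
    (∏ j ∈ range k, (b ^ 2 * p ^ (2 * j))) * p ^ k = b ^ (2 * k) * p ^ (k ^ 2) := by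
  induction k with
  | zero => simp
  | succ k ih =>
    rw [Finset.prod_range_succ]
    linear_combination (b ^ 2 * p ^ (2 * k + 1)) * ih

lemma fT_form (p b u : R) (k m : ℕ) (h : p ^ (k + m) * b = -1) :
    fT p b u (k + m) k * p ^ (3 * k) =
      (1 + p ^ (2 * k) * b) * p ^ (4 * k ^ 2 + 2 * k) * b ^ (2 * m + 6 * k) *
      ((pC p (k + m) k * pC p (k + m) m) * (pB p u (k + m) k * pB p u (k + m) m)) := by
  have hsq : ∀ j ∈ range k, b ^ 2 * p ^ (2 * j) * p ^ (2 * (k + m - j)) = 1 := by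
    intro j hj
    simp at hj
    obtain ⟨e, he⟩ : ∃ e, k + m = j + e := ⟨k + m - j, by omega⟩
    rw [he] at h ⊢
    have : j + e - j = e := by omega
    rw [this]
    have : (p ^ (j + e) * b) ^ 2 = 1 := by rw [h]; ring
    rw [← this]; ring
  have h1 : qp (b ^ 2) (p ^ 2) k = (-1) ^ k * (∏ j ∈ range k, (b ^ 2 * p ^ (2 * j))) *
      pC p (k + m) m := by
    unfold pC
    have := prod_refl (fun i => 1 - p ^ (2 * i)) k m
    simp only [mul_add, mul_one] at this
    rw [← this, qp, show (-1 : R) ^ k = ∏ j ∈ range k, (-1) by simp, ← Finset.prod_mul_distrib,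
      ← Finset.prod_mul_distrib]
    refine Finset.prod_congr rfl fun j hj => ?_
    have := hsq j hj
    rw [← pow_mul]
    linear_combination (-1) * this
  have h2 : pA p b u k = (∏ j ∈ range k, (b ^ 2 * p ^ (2 * j))) ^ 2 * pB p u (k + m) m := by
    unfold pA pB
    have := prod_refl (fun i => 1 - u * p ^ (2 * i) + (p ^ (2 * i)) ^ 2) k m
    simp only [mul_add, mul_one] at this
    rw [← this, ← Finset.prod_pow, ← Finset.prod_mul_distrib]
    refine Finset.prod_congr rfl fun j hj => ?_
    have := hsq j hj
    generalize p ^ (2 * (k + m - j)) = y at *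
    generalize b ^ 2 * p ^ (2 * j) = x at *
    linear_combination (u * x - x * y - 1) * this
  have h3 := prod_scal p b k
  have e1 : k + m - k = m := by omega
  unfold fT
  rw [h1, h2, e1]
  have hs : ((-1 : R) ^ k) * (-1) ^ k = 1 := by rw [← mul_pow]; simp
  generalize (-1 : R) ^ k = sg at *
  generalize (∏ j ∈ range k, (b ^ 2 * p ^ (2 * j))) = g at *
  generalize pB p u (k + m) k = B1
  generalize pB p u (k + m) m = B2
  generalize pC p (k + m) k = C1
  generalize pC p (k + m) m = C2
  have h4 : g ^ 3 * p ^ (3 * k) = b ^ (6 * k) * p ^ (3 * k ^ 2) := by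
    calc g ^ 3 * p ^ (3 * k) = (g * p ^ k) ^ 3 := by ring
      _ = _ := by rw [h3]; ring
  calc _ = (sg * sg) * (1 + p ^ (2 * k) * b) * (g ^ 3 * p ^ (3 * k)) * p ^ (k ^ 2 + 2 * k) * b ^ (2 * m)
          * (C1 * C2 * (B1 * B2)) := by ring
    _ = _ := by rw [hs, h4]; ring

lemma fT_anti (p b u : R) (k m : ℕ) (hp : IsUnit p) (h : p ^ (k + m) * b = -1) :
    fT p b u (k + m) k + fT p b u (k + m) m = 0 := by
  have h1 := fT_form p b u k m h
  have h2 := fT_form p b u m k (by rw [add_comm]; exact h)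
  rw [add_comm m k] at h2
  have hu : IsUnit (p ^ (3 * k + 3 * m + 4 * k * m)) := hp.pow _
  rw [← hu.mul_left_inj]
  have e : (fT p b u (k + m) k + fT p b u (k + m) m) * p ^ (3 * k + 3 * m + 4 * k * m) =
    (fT p b u (k + m) k * p ^ (3 * k)) * p ^ (3 * m + 4 * k * m) +
    (fT p b u (k + m) m * p ^ (3 * m)) * p ^ (3 * k + 4 * k * m) := by ring
  rw [e, h1, h2]
  have f1 : p ^ (4 * k ^ 2 + 4 * k * m) * b ^ (4 * k) = 1 := by
    calc _ = (p ^ (k + m) * b) ^ (4 * k) := by ring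
      _ = 1 := by rw [h, pow_mul]; norm_num
  have f2 : p ^ (4 * m ^ 2 + 4 * k * m) * b ^ (4 * m) = 1 := by
    calc _ = (p ^ (k + m) * b) ^ (4 * m) := by ring
      _ = 1 := by rw [h, pow_mul]; norm_num
  generalize pB p u (k + m) k = B1
  generalize pB p u (k + m) m = B2
  generalize pC p (k + m) k = C1
  generalize pC p (k + m) m = C2
  calc _ = (C1 * C2 * (B1 * B2)) * b ^ (2 * k + 2 * m) *
        ((1 + p ^ (2 * k) * b) * p ^ (2 * k + 3 * m) * (p ^ (4 * k ^ 2 + 4 * k * m) * b ^ (4 * k)) +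
        (1 + p ^ (2 * m) * b) * p ^ (2 * m + 3 * k) * (p ^ (4 * m ^ 2 + 4 * k * m) * b ^ (4 * m))) := by
          ring
    _ = (C1 * C2 * (B1 * B2)) * b ^ (2 * k + 2 * m) * (p ^ (2 * k + 2 * m) * (p ^ k + p ^ m) *
        (1 + p ^ (k + m) * b)) := by rw [f1, f2]; ring
    _ = 0 * p ^ (3 * k + 3 * m + 4 * k * m) := by rw [h]; ring

lemma FF_zero (p b u : R) (N : ℕ) (hp : IsUnit p) (h : p ^ N * b = -1) : FF p b u N = 0 := by
  unfold FF
  refine Finset.sum_involution (fun k _ => N - k) ?_ ?_ ?_ ?_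
  · intro k hk
    obtain ⟨m, rfl⟩ := Nat.exists_eq_add_of_le (show k ≤ N by simp at hk; omega)
    have : k + m - k = m := by omega
    rw [this]
    exact fT_anti p b u k m hp h
  · intro k hk hne heq
    apply hne
    have h2 : 2 * k = N := by simp at hk; omega
    unfold fT
    rw [h2, h]; ring
  · intro k hk; simp
  · intro k hk; simp at hk ⊢; omega

lemma FF_dvd (p b u : R) (N : ℕ) (hp : IsUnit p) : (1 + p ^ N * b) ∣ FF p b u N := by
  rw [← Ideal.mem_span_singleton, ← Ideal.Quotient.eq_zero_iff_mem, map_FF]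
  apply FF_zero
  · exact hp.map _
  · have : Ideal.Quotient.mk (Ideal.span {1 + p ^ N * b}) (1 + p ^ N * b) = 0 := by
      rw [Ideal.Quotient.eq_zero_iff_mem]; exact Ideal.mem_span_singleton_self _
    simp only [map_add, map_one, map_mul, map_pow] at this
    linear_combination this

lemma FF_sub (p b u v : R) (N : ℕ) (hp : IsUnit p) :
    ∃ y, FF p b u N - FF p b v N = (1 + p ^ N * b) * (u - v) * y := by
  obtain ⟨H, hH⟩ := FF_dvd (Polynomial.C p) (Polynomial.C b) (Polynomial.X) N (hp.map _)
  have key : ∀ t, FF p b t N = (1 + p ^ N * b) * H.eval t := by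
    intro t
    have := congrArg (Polynomial.evalRingHom t) hH
    rw [map_FF] at this
    simpa using this
  obtain ⟨y, hy⟩ := Polynomial.sub_dvd_eval_sub u v H
  refine ⟨y, ?_⟩
  rw [key, key, ← mul_sub, hy]; ring

lemma AB_sub (p b u v : R) (N k : ℕ) :
    ∃ y, pA p b u k * pB p u N 0 - pA p b v k * pB p v N 0 = (u - v) * y := by
  let H : Polynomial R := pA (Polynomial.C p) (Polynomial.C b) (Polynomial.X) k *
    pB (Polynomial.C p) (Polynomial.X) N 0
  have key : ∀ t, pA p b t k * pB p t N 0 = H.eval t := by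
    intro t
    simp [H, pA, pB, Polynomial.eval_prod]
  obtain ⟨y, hy⟩ := Polynomial.sub_dvd_eval_sub u v H
  exact ⟨y, by rw [key, key, hy]⟩

end pairing
section main
variable {K : Type*} [Field K]

/-- alpha of the Bailey pair -/
def alp (p b : K) (r : ℕ) : K :=
  (-1) ^ r * (1 + p ^ (2 * r) * b) / (1 + b) * qp (b ^ 2) (p ^ 2) r /
      qp (p ^ 2) (p ^ 2) r * p ^ (r ^ 2)

/-- beta of the Bailey pair -/
def bet (p b : K) (k : ℕ) : K :=
  qp p (p ^ 2) k / (qp (p ^ 2) (p ^ 2) k * qp (p * b) p (2 * k))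

lemma qp_ne (x Q : K) (k : ℕ) (h : ∀ j < k, 1 - x * Q ^ j ≠ 0) : qp x Q k ≠ 0 := by
  unfold qp
  rw [Finset.prod_ne_zero_iff]
  intro j hj; exact h j (by simpa using hj)

lemma pC_mul (p : K) (N k : ℕ) (hk : k ≤ N) :
    qp (p ^ 2) (p ^ 2) k * pC p N k = qp (p ^ 2) (p ^ 2) N := by
  unfold qp pC
  rw [← Finset.prod_range_mul_prod_Ico _ hk]
  congr 1
  refine Finset.prod_congr rfl fun j _ => ?_
  ring

lemma fT_eq (p b u : K) (N k : ℕ) (hk : k ≤ N) (hb0 : b ≠ 0) (hb : 1 + b ≠ 0)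
    (hQ : ∀ k, qp (p ^ 2) (p ^ 2) k ≠ 0) :
    fT p b u N k = (1 + b) * qp (p ^ 2) (p ^ 2) N * b ^ (2 * N) *
      (alp p b k * (p ^ 2 / b ^ 2) ^ k * (pA p b u k * pB p u N k)) := by
  rw [← pC_mul p N k hk]
  obtain ⟨m, rfl⟩ := Nat.exists_eq_add_of_le hk
  have e : k + m - k = m := by omega
  have := hQ k
  unfold fT alp
  rw [e, div_pow, ← pow_mul, ← pow_mul, mul_add 2 k m, pow_add, pow_add]
  field_simp

lemma wV_eq (p b : K) (N k : ℕ) (hk : k ≤ N) (hp0 : p ≠ 0) (hb0 : b ≠ 0)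
    (hQ : ∀ k, qp (p ^ 2) (p ^ 2) k ≠ 0) :
    qp (b ^ 2 / (p ^ N * b) ^ 2) (p ^ 2) k * (p ^ 2 / b ^ 2) ^ k =
      wV (p ^ 2) (p ^ 2 / (p ^ N * b) ^ 2) N k := by
  induction k with
  | zero => simp [qp_zero, wV, hQ N]
  | succ k ih =>
    have ih := ih (by omega)
    obtain ⟨m, rfl⟩ : ∃ m, N = k + 1 + m := ⟨N - (k + 1), by omega⟩
    have e1 : k + 1 + m - (k + 1) = m := by omega
    have e2 : k + 1 + m - k = m + 1 := by omega
    have hstep : wV (p ^ 2) (p ^ 2 / (p ^ (k + 1 + m) * b) ^ 2) (k + 1 + m) (k + 1) =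
      wV (p ^ 2) (p ^ 2 / (p ^ (k + 1 + m) * b) ^ 2) (k + 1 + m) k *
       (-(p ^ 2 / (p ^ (k + 1 + m) * b) ^ 2) * (p ^ 2) ^ k * (1 - (p ^ 2) ^ (m + 1))) := by
      unfold wV
      rw [e1, e2]
      have h1 := hQ (m + 1)
      rw [qp_succ] at h1 ⊢
      have h2 := left_ne_zero_of_mul h1
      have h3 := right_ne_zero_of_mul h1
      rw [Nat.choose_succ_succ' k 1, Nat.choose_one_right, pow_add (p ^ 2),
        pow_succ (-(p ^ 2 / (p ^ (k + 1 + m) * b) ^ 2)) k]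
      rw [show p ^ 2 * (p ^ 2) ^ m = (p ^ 2) ^ (m + 1) by ring] at *
      generalize (-(p ^ 2 / (p ^ (k + 1 + m) * b) ^ 2)) = Y
      generalize 1 - (p ^ 2) ^ (m + 1) = Z at *
      field_simp
    rw [hstep, ← ih, qp_succ, pow_succ (p ^ 2 / b ^ 2)]
    have : (1 - b ^ 2 / (p ^ (k + 1 + m) * b) ^ 2 * (p ^ 2) ^ k) * (p ^ 2 / b ^ 2) =
        (-(p ^ 2 / (p ^ (k + 1 + m) * b) ^ 2) * (p ^ 2) ^ k * (1 - (p ^ 2) ^ (m + 1))) := by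
      field_simp
      ring
    rw [← this]; ring

lemma pA_eq (p b : K) (N k : ℕ) (hp0 : p ≠ 0) (hb0 : b ≠ 0) :
    pA p b ((p ^ N * b) ^ 2 + 1 / (p ^ N * b) ^ 2) k =
    qp (b ^ 2 * (p ^ N * b) ^ 2) (p ^ 2) k * qp (b ^ 2 / (p ^ N * b) ^ 2) (p ^ 2) k := by
  unfold pA qp
  rw [← Finset.prod_mul_distrib]
  refine Finset.prod_congr rfl fun j _ => ?_
  have : p ^ N * b ≠ 0 := by positivity
  generalize p ^ N * b = w at *
  rw [pow_mul]
  field_simp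
  ring

lemma pB_eq (p b : K) (N k : ℕ) (hk : k ≤ N) (hp0 : p ≠ 0) (hb0 : b ≠ 0) :
    pB p ((p ^ N * b) ^ 2 + 1 / (p ^ N * b) ^ 2) N 0 =
    qp (p ^ 2 / (p ^ N * b) ^ 2) (p ^ 2) k * qp (b ^ 2 * p ^ 2 * (p ^ 2) ^ N) (p ^ 2) k *
      pB p ((p ^ N * b) ^ 2 + 1 / (p ^ N * b) ^ 2) N k := by
  unfold pB qp
  rw [← Finset.prod_mul_distrib, ← Finset.range_eq_Ico, ← Finset.prod_range_mul_prod_Ico _ hk]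
  congr 1
  refine Finset.prod_congr rfl fun j _ => ?_
  have : p ^ N * b ≠ 0 := by positivity
  rw [show b ^ 2 * p ^ 2 * (p ^ 2) ^ N = p ^ 2 * (p ^ N * b) ^ 2 by ring]
  generalize p ^ N * b = w at *
  rw [show p ^ (2 * j + 2) = (p ^ 2) ^ j * p ^ 2 by ring]
  field_simp
  ring

lemma D_eq (p b : K) (N : ℕ) (hp0 : p ≠ 0) (hb0 : b ≠ 0) :
    qp (p ^ 2 / (p ^ N * b) ^ 2) (p ^ 2) N * ∏ j ∈ range N, (b ^ 2 * p ^ (2 * j)) =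
      (-1) ^ N * qp (b ^ 2) (p ^ 2) N := by
  unfold qp
  rw [← Finset.prod_range_reflect, show (-1 : K) ^ N = ∏ j ∈ range N, (-1) by simp,
    ← Finset.prod_mul_distrib, ← Finset.prod_mul_distrib]
  refine Finset.prod_congr rfl fun j hj => ?_
  obtain ⟨m, rfl⟩ : ∃ m, N = j + 1 + m := ⟨N - (j + 1), by simp at hj; omega⟩
  have e : j + 1 + m - 1 - j = m := by omega
  rw [e]
  field_simp
  ring

lemma F_eq_H (p b : K) (N : ℕ) (hp0 : p ≠ 0) (hb0 : b ≠ 0)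
    (hp : ∀ i : ℕ, 1 ≤ i → 1 - p ^ i ≠ 0)
    (hb2 : ∀ i : ℕ, 1 - b ^ 2 * p ^ (2 * i) ≠ 0)
    (hb1 : ∀ j : ℕ, 1 - p ^ j * b ≠ 0) (hb : 1 + b ≠ 0) (u : K)
    (hu : u = (p ^ N * b) ^ 2 + 1 / (p ^ N * b) ^ 2) :
    FF p b u N / ((1 + b) * qp (p ^ 2) (p ^ 2) N * b ^ (2 * N)) =
    (-1) ^ N * (1 - (p ^ N * b) ^ 2) / (1 - b ^ 2) * (∏ j ∈ range N, (b ^ 2 * p ^ (2 * j))) *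
      ∑ k ∈ range (N + 1), bet p b k * (p ^ 2 / b ^ 2) ^ k * (pA p b u k * pB p u N 0) := by
  have hQ : ∀ k, qp (p ^ 2) (p ^ 2) k ≠ 0 := fun k => qp_ne _ _ _ fun j _ => by
    have := hp (2 * j + 2) (by omega)
    convert this using 2; ring
  have hq : ∀ k, qp (b ^ 2 * p ^ 2) (p ^ 2) k ≠ 0 := fun k => qp_ne _ _ _ fun j _ => by
    have := hb2 (j + 1)
    convert this using 2; ring
  have hbb : ∀ k, qp (p * b) p k ≠ 0 := fun k => qp_ne _ _ _ fun j _ => by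
    have := hb1 (j + 1)
    convert this using 2; ring
  have hg : (∏ j ∈ range N, (b ^ 2 * p ^ (2 * j))) ≠ 0 := by
    rw [Finset.prod_ne_zero_iff]; intro j _; positivity
  have hqb : qp (b ^ 2) (p ^ 2) N ≠ 0 := qp_ne _ _ _ fun j _ => by
    have := hb2 j
    rwa [pow_mul] at this
  have hDN : qp (p ^ 2 / (p ^ N * b) ^ 2) (p ^ 2) N ≠ 0 := by
    intro h0
    have := D_eq p b N hp0 hb0
    rw [h0, zero_mul] at this
    have h1 : (-1 : K) ^ N ≠ 0 := by simp
    exact mul_ne_zero h1 hqb this.symm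
  have hD : ∀ k, k ≤ N → qp (p ^ 2 / (p ^ N * b) ^ 2) (p ^ 2) k ≠ 0 := by
    intro k hk
    obtain ⟨m, rfl⟩ := Nat.exists_eq_add_of_le hk
    rw [qp_add] at hDN
    exact left_ne_zero_of_mul hDN
  have hw := watson (p ^ 2) (b ^ 2) (p ^ 2 / (p ^ N * b) ^ 2) (b ^ 2 * (p ^ N * b) ^ 2) N
    (by field_simp) hQ hq hD (alp p b) (bet p b) (be_eq p b hp hb2 hQ hq hbb hb)
  have hpref : (-1) ^ N * (1 - (p ^ N * b) ^ 2) / (1 - b ^ 2) *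
      (∏ j ∈ range N, (b ^ 2 * p ^ (2 * j))) =
      qp (b ^ 2 * p ^ 2) (p ^ 2) N / qp (p ^ 2 / (p ^ N * b) ^ 2) (p ^ 2) N := by
    have h1 := D_eq p b N hp0 hb0
    have h2 : qp (b ^ 2) (p ^ 2) N * (1 - (p ^ N * b) ^ 2) =
        (1 - b ^ 2) * qp (b ^ 2 * p ^ 2) (p ^ 2) N := by
      rw [← qp_succ', qp_succ]; ring
    have h3 : 1 - b ^ 2 ≠ 0 := by simpa using hb2 0
    have hs : ((-1 : K) ^ N) * (-1) ^ N = 1 := by rw [← mul_pow]; simp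
    rw [div_mul_eq_mul_div, div_eq_div_iff h3 hDN]
    linear_combination ((-1) ^ N * (1 - (p ^ N * b) ^ 2)) * h1 + h2 +
      (1 - (p ^ N * b) ^ 2) * qp (b ^ 2) (p ^ 2) N * hs
  have hcc : (1 + b) * qp (p ^ 2) (p ^ 2) N * b ^ (2 * N) ≠ 0 :=
    mul_ne_zero (mul_ne_zero hb (hQ N)) (pow_ne_zero _ hb0)
  have hL : FF p b u N / ((1 + b) * qp (p ^ 2) (p ^ 2) N * b ^ (2 * N)) =
      pB p u N 0 * ∑ r ∈ range (N + 1), alp p b r *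
        (qp (b ^ 2 * (p ^ N * b) ^ 2) (p ^ 2) r * wV (p ^ 2) (p ^ 2 / (p ^ N * b) ^ 2) N r /
        (qp (p ^ 2 / (p ^ N * b) ^ 2) (p ^ 2) r * qp (b ^ 2 * p ^ 2 * (p ^ 2) ^ N) (p ^ 2) r)) := by
    unfold FF
    rw [Finset.sum_div, Finset.mul_sum]
    refine Finset.sum_congr rfl fun k hk => ?_
    have hk' : k ≤ N := by simp at hk; omega
    rw [fT_eq p b u N k hk' hb0 hb hQ, mul_div_cancel_left₀ _ hcc, ← wV_eq p b N k hk' hp0 hb0 hQ]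
    rw [hu, pA_eq p b N k hp0 hb0, pB_eq p b N k hk' hp0 hb0]
    have n1 := hD k hk'
    have n2 : qp (b ^ 2 * p ^ 2 * (p ^ 2) ^ N) (p ^ 2) k ≠ 0 := by
      have := hq (N + k)
      rw [qp_add] at this
      exact right_ne_zero_of_mul this
    generalize qp (b ^ 2 * p ^ 2 * (p ^ 2) ^ N) (p ^ 2) k = Y1 at *
    generalize qp (p ^ 2 / (p ^ N * b) ^ 2) (p ^ 2) k = Y2 at *
    generalize qp (b ^ 2 / (p ^ N * b) ^ 2) (p ^ 2) k = Y3 at *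
    generalize qp (b ^ 2 * (p ^ N * b) ^ 2) (p ^ 2) k = Y4 at *
    generalize pB p _ N k = Y5
    generalize (p ^ 2 / b ^ 2) ^ k = Y6
    field_simp
  have hR : ∑ k ∈ range (N + 1), bet p b k * (p ^ 2 / b ^ 2) ^ k * (pA p b u k * pB p u N 0) =
      pB p u N 0 * ∑ k ∈ range (N + 1), qp (b ^ 2 * (p ^ N * b) ^ 2) (p ^ 2) k *
        wV (p ^ 2) (p ^ 2 / (p ^ N * b) ^ 2) N k * bet p b k := by
    rw [Finset.mul_sum]
    refine Finset.sum_congr rfl fun k hk => ?_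
    have hk' : k ≤ N := by simp at hk; omega
    rw [← wV_eq p b N k hk' hp0 hb0 hQ, hu, pA_eq p b N k hp0 hb0]
    ring
  rw [hL, hR, hw, hpref]
  have aux : ∀ x y s t : K, x ≠ 0 → y ≠ 0 → s * t = y / x * (s * (x / y * t)) := by
    intro x y s t hx hy
    field_simp
  exact aux _ _ _ _ hDN (hq N)

end main
section divis
variable {K : Type*} [Field K]

lemma pA_two (p b : K) (k : ℕ) : pA p b 2 k = qp (b ^ 2) (p ^ 2) k ^ 2 := by
  unfold pA qp
  rw [← Finset.prod_pow]
  refine Finset.prod_congr rfl fun j _ => ?_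
  rw [pow_mul]; ring

lemma pB_two (p : K) (N k : ℕ) : pB p 2 N k = pC p N k ^ 2 := by
  unfold pB pC
  rw [← Finset.prod_pow]
  refine Finset.prod_congr rfl fun j _ => ?_
  ring

lemma qp_mem (S : Subring K) (x Q : K) (k : ℕ) (hx : x ∈ S) (hQ : Q ∈ S) : qp x Q k ∈ S :=
  Subring.prod_mem _ fun _ _ => S.sub_mem S.one_mem (S.mul_mem hx (S.pow_mem hQ _))

lemma qp_inv_mem (S : Subring K) (x Q : K) (k : ℕ) (h : ∀ j < k, (1 - x * Q ^ j)⁻¹ ∈ S) :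
    (qp x Q k)⁻¹ ∈ S := by
  unfold qp
  rw [← Finset.prod_inv_distrib]
  exact Subring.prod_mem _ fun j hj => h j (by simpa using hj)

lemma bet_mem (S : Subring K) (p b : K) (N k : ℕ) (hN : 1 ≤ N) (hk : k ≤ N) (hpS : p ∈ S)
    (hbS : b ∈ S)
    (hQS : ∀ i : ℕ, 1 ≤ i → i ≤ N → (1 - p ^ (2 * i))⁻¹ ∈ S)
    (hbjS : ∀ j : ℕ, 1 ≤ j → j ≤ 2 * N → j ≠ N → (1 - p ^ j * b)⁻¹ ∈ S)
    (hw : 1 - p ^ N * b ≠ 0) :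
    (1 - p ^ N * b) * bet p b k ∈ S := by
  have h1 : (qp (p ^ 2) (p ^ 2) k)⁻¹ ∈ S := qp_inv_mem _ _ _ _ fun j hj => by
    have := hQS (j + 1) (by omega) (by omega)
    convert this using 3; ring
  have h2 : (1 - p ^ N * b) * (qp (p * b) p (2 * k))⁻¹ ∈ S := by
    unfold qp
    by_cases h : N ≤ 2 * k
    · rw [← Finset.mul_prod_erase (range (2 * k)) _ (show N - 1 ∈ range (2 * k) by simp; omega)]
      have e : p * b * p ^ (N - 1) = p ^ N * b := by
        obtain ⟨m, rfl⟩ := Nat.exists_eq_add_of_le hN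
        simp; ring
      rw [e, mul_inv, mul_inv_cancel_left₀ hw, ← Finset.prod_inv_distrib]
      refine Subring.prod_mem _ fun j hj => ?_
      simp at hj
      have := hbjS (j + 1) (by omega) (by omega) (by omega)
      convert this using 3; ring
    · refine S.mul_mem (S.sub_mem S.one_mem (S.mul_mem (S.pow_mem hpS _) hbS)) ?_
      rw [← Finset.prod_inv_distrib]
      refine Subring.prod_mem _ fun j hj => ?_
      simp at hj
      have := hbjS (j + 1) (by omega) (by omega) (by omega)
      convert this using 3; ring
  have h3 := qp_mem S p (p ^ 2) k hpS (S.pow_mem hpS 2)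
  have := S.mul_mem (S.mul_mem h1 h2) h3
  convert this using 1
  unfold bet
  rw [div_eq_mul_inv, mul_inv]; ring

theorem mainS (S : Subring K) (p b : K) (N : ℕ) (hN : 1 ≤ N) (hp0 : p ≠ 0) (hb0 : b ≠ 0)
    (hp : ∀ i : ℕ, 1 ≤ i → 1 - p ^ i ≠ 0)
    (hb2 : ∀ i : ℕ, 1 - b ^ 2 * p ^ (2 * i) ≠ 0)
    (hb1 : ∀ j : ℕ, 1 - p ^ j * b ≠ 0) (hb : 1 + b ≠ 0)
    (hpS : p ∈ S) (hpiS : p⁻¹ ∈ S) (hbS : b ∈ S) (hbiS : b⁻¹ ∈ S)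
    (hQS : ∀ i : ℕ, 1 ≤ i → i ≤ N → (1 - p ^ (2 * i))⁻¹ ∈ S)
    (hbjS : ∀ j : ℕ, 1 ≤ j → j ≤ 2 * N → j ≠ N → (1 - p ^ j * b)⁻¹ ∈ S)
    (hb1S : (1 + b)⁻¹ ∈ S) (hb2S : (1 - b)⁻¹ ∈ S) :
    ∃ y ∈ S, (∑ k ∈ range (N + 1), alp p b k * (p ^ 2 / b ^ 2) ^ k *
        (qp (b ^ 2) (p ^ 2) k ^ 2 / qp (p ^ 2) (p ^ 2) k ^ 2)) -
      (-1) ^ N * (1 - (p ^ N * b) ^ 2) / (1 - b ^ 2) * (∏ j ∈ range N, (b ^ 2 * p ^ (2 * j))) *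
        (∑ k ∈ range (N + 1), bet p b k * (p ^ 2 / b ^ 2) ^ k * qp (b ^ 2) (p ^ 2) k ^ 2)
      = (1 + p ^ N * b) ^ 3 * (1 - p ^ N * b) ^ 2 * y := by
  have hQ : ∀ k, qp (p ^ 2) (p ^ 2) k ≠ 0 := fun k => qp_ne _ _ _ fun j _ => by
    have := hp (2 * j + 2) (by omega)
    convert this using 2; ring
  have hw0 : p ^ N * b ≠ 0 := mul_ne_zero (pow_ne_zero _ hp0) hb0
  have hwS : p ^ N * b ∈ S := S.mul_mem (S.pow_mem hpS _) hbS
  have hwiS : (p ^ N * b)⁻¹ ∈ S := by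
    rw [mul_inv, ← inv_pow]; exact S.mul_mem (S.pow_mem hpiS _) hbiS
  obtain ⟨u, hu⟩ : ∃ u : K, u = (p ^ N * b) ^ 2 + 1 / (p ^ N * b) ^ 2 := ⟨_, rfl⟩
  have huS : u ∈ S := by
    rw [hu, one_div, ← inv_pow]
    exact S.add_mem (S.pow_mem hwS _) (S.pow_mem hwiS _)
  have hFH := F_eq_H p b N hp0 hb0 hp hb2 hb1 hb u hu
  -- lift to `S`
  have hun : IsUnit (⟨p, hpS⟩ : S) := by
    refine IsUnit.of_mul_eq_one ⟨p⁻¹, hpiS⟩ ?_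
    ext; simp [hp0]
  obtain ⟨y1, hy1⟩ := FF_sub (⟨p, hpS⟩ : S) ⟨b, hbS⟩ 2 ⟨u, huS⟩ N hun
  have hy1' := congrArg S.subtype hy1
  rw [map_sub, map_FF, map_FF] at hy1'
  simp only [map_mul, map_add, map_sub, map_one, map_pow, Subring.subtype_apply, map_ofNat] at hy1'
  have hAB : ∀ k, ∃ y ∈ S, pA p b 2 k * pB p 2 N 0 - pA p b u k * pB p u N 0 = (2 - u) * y := by
    intro k
    obtain ⟨y, hy⟩ := AB_sub (⟨p, hpS⟩ : S) ⟨b, hbS⟩ 2 ⟨u, huS⟩ N k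
    refine ⟨y, y.2, ?_⟩
    have := congrArg S.subtype hy
    have h2 : ((2 : S) : K) = 2 := rfl
    simpa [pA, pB, h2] using this
  choose Y hYS hY using hAB
  set c := (1 + b) * qp (p ^ 2) (p ^ 2) N * b ^ (2 * N) with hc
  have hcc : c ≠ 0 := mul_ne_zero (mul_ne_zero hb (hQ N)) (pow_ne_zero _ hb0)
  set q := qp (p ^ 2) (p ^ 2) N with hq
  have hqiS : q⁻¹ ∈ S := qp_inv_mem _ _ _ _ fun j hj => by
    have := hQS (j + 1) (by omega) (by omega)
    convert this using 3; ring
  have hciS : c⁻¹ ∈ S := by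
    rw [hc, mul_inv, mul_inv, ← inv_pow]
    exact S.mul_mem (S.mul_mem hb1S hqiS) (S.pow_mem hbiS _)
  set g := ∏ j ∈ range N, (b ^ 2 * p ^ (2 * j)) with hg
  have hgS : g ∈ S := Subring.prod_mem _ fun j _ => S.mul_mem (S.pow_mem hbS _) (S.pow_mem hpS _)
  set L := ∑ k ∈ range (N + 1), alp p b k * (p ^ 2 / b ^ 2) ^ k *
        (qp (b ^ 2) (p ^ 2) k ^ 2 / qp (p ^ 2) (p ^ 2) k ^ 2) with hL
  have hFL : FF p b 2 N / c = q ^ 2 * L := by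
    unfold FF
    rw [Finset.sum_div, hL, Finset.mul_sum]
    refine Finset.sum_congr rfl fun k hk => ?_
    have hk' : k ≤ N := by simp at hk; omega
    rw [fT_eq p b 2 N k hk' hb0 hb hQ, mul_div_cancel_left₀ _ hcc, pA_two, pB_two, hq,
      ← pC_mul p N k hk']
    have := hQ k
    field_simp
  have hB0 : pB p 2 N 0 = q ^ 2 := by
    rw [pB_two, hq, ← pC_mul p N 0 (by omega), qp_zero, one_mul]
  set pf := (-1) ^ N * (1 - (p ^ N * b) ^ 2) / (1 - b ^ 2) * g with hpf
  have hRR : pf * (∑ k ∈ range (N + 1), bet p b k * (p ^ 2 / b ^ 2) ^ k * qp (b ^ 2) (p ^ 2) k ^ 2)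
      * q ^ 2 = pf * ∑ k ∈ range (N + 1), bet p b k * (p ^ 2 / b ^ 2) ^ k *
        (pA p b 2 k * pB p 2 N 0) := by
    rw [mul_assoc, Finset.sum_mul]
    congr 1
    refine Finset.sum_congr rfl fun k hk => ?_
    rw [hB0, pA_two]; ring
  set T := (∑ k ∈ range (N + 1), bet p b k * (p ^ 2 / b ^ 2) ^ k * qp (b ^ 2) (p ^ 2) k ^ 2) with hT
  have hzS : ∀ k : ℕ, (p ^ 2 / b ^ 2) ^ k ∈ S := fun k => by
    rw [div_eq_mul_inv, ← inv_pow]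
    exact S.pow_mem (S.mul_mem (S.pow_mem hpS _) (S.pow_mem hbiS _)) _
  -- the right-hand difference
  let E := ∑ k ∈ range (N + 1), ((-1) ^ N * (1 + b)⁻¹ * (1 - b)⁻¹ * g *
    ((1 - p ^ N * b) * bet p b k) * (p ^ 2 / b ^ 2) ^ k * Y k)
  have hES : E ∈ S := by
    refine Subring.sum_mem _ fun k hk => ?_
    have hk' : k ≤ N := by simp at hk; omega
    refine S.mul_mem (S.mul_mem (S.mul_mem (S.mul_mem (S.mul_mem (S.mul_mem ?_ hb1S) hb2S) hgS) ?_)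
      (hzS k)) (hYS k)
    · exact S.pow_mem (S.neg_mem S.one_mem) _
    · exact bet_mem S p b N k hN hk' hpS hbS hQS hbjS (hb1 N)
  have hb2' : 1 - b ≠ 0 := by simpa using hb1 0
  have hRdiff : pf * (∑ k ∈ range (N + 1), bet p b k * (p ^ 2 / b ^ 2) ^ k *
        (pA p b 2 k * pB p 2 N 0)) - pf * (∑ k ∈ range (N + 1), bet p b k * (p ^ 2 / b ^ 2) ^ k *
        (pA p b u k * pB p u N 0)) = (1 + p ^ N * b) * (2 - u) * E := by
    rw [← mul_sub, ← Finset.sum_sub_distrib, Finset.mul_sum, Finset.mul_sum]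
    refine Finset.sum_congr rfl fun k hk => ?_
    rw [← mul_sub, hY, hpf, show (1 : K) - b ^ 2 = (1 + b) * (1 - b) by ring]
    generalize p ^ N * b = w
    field_simp
    ring
  have hq0 : q ≠ 0 := hQ N
  refine ⟨- (q⁻¹) ^ 2 * ((p ^ N * b)⁻¹) ^ 2 * (c⁻¹ * y1 - E), ?_, ?_⟩
  · exact S.mul_mem (S.mul_mem (S.neg_mem (S.pow_mem hqiS _)) (S.pow_mem hwiS _))
      (S.sub_mem (S.mul_mem hciS y1.2) hES)
  · have hmain : q ^ 2 * (L - pf * T) = (1 + p ^ N * b) * (2 - u) * (c⁻¹ * y1 - E) := by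
      have e1 : q ^ 2 * (L - pf * T) = FF p b 2 N / c - pf * T * q ^ 2 := by rw [hFL]; ring
      rw [e1, hRR]
      have e2 : FF p b 2 N / c = FF p b u N / c + (1 + p ^ N * b) * (2 - u) * (c⁻¹ * y1) := by
        rw [← sub_eq_iff_eq_add', ← sub_div, hy1']
        field_simp
      rw [e2, hFH]
      linear_combination -hRdiff
    have hu2 : 2 - u = - (1 + p ^ N * b) ^ 2 * (1 - p ^ N * b) ^ 2 * ((p ^ N * b)⁻¹) ^ 2 := by
      rw [hu]
      generalize p ^ N * b = w at *
      field_simp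
      ring
    rw [hu2] at hmain
    apply mul_left_cancel₀ (pow_ne_zero 2 hq0)
    rw [hmain]
    generalize p ^ N * b = w at *
    generalize c⁻¹ * (y1 : K) - E = Z
    field_simp

end divis

section final

/-- The subring of rational functions regular at `ζ` and `-ζ`. -/
def regS (ζ : ℂ) : Subring (RatFunc ℚ) where
  carrier := {x | ∃ a d : ℚ[X], aeval ζ d ≠ 0 ∧ aeval (-ζ) d ≠ 0 ∧
    x = algebraMap ℚ[X] (RatFunc ℚ) a / algebraMap ℚ[X] (RatFunc ℚ) d}
  mul_mem' := by
    rintro x y ⟨a, d, h1, h2, rfl⟩ ⟨a', d', h1', h2', rfl⟩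
    refine ⟨a * a', d * d', ?_, ?_, ?_⟩
    · simp [h1, h1']
    · simp [h2, h2']
    · simp only [map_mul]; rw [div_mul_div_comm]
  one_mem' := ⟨1, 1, by simp, by simp, by simp⟩
  zero_mem' := ⟨0, 1, by simp, by simp, by simp⟩
  add_mem' := by
    rintro x y ⟨a, d, h1, h2, rfl⟩ ⟨a', d', h1', h2', rfl⟩
    have hd : algebraMap ℚ[X] (RatFunc ℚ) d ≠ 0 := by
      intro h
      have : d = 0 := (map_eq_zero_iff _ (RatFunc.algebraMap_injective ℚ)).1 h
      simp [this] at h1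
    have hd' : algebraMap ℚ[X] (RatFunc ℚ) d' ≠ 0 := by
      intro h
      have : d' = 0 := (map_eq_zero_iff _ (RatFunc.algebraMap_injective ℚ)).1 h
      simp [this] at h1'
    refine ⟨a * d' + d * a', d * d', ?_, ?_, ?_⟩
    · simp [h1, h1']
    · simp [h2, h2']
    · simp only [map_mul, map_add]; rw [div_add_div _ _ hd hd']
  neg_mem' := by
    rintro x ⟨a, d, h1, h2, rfl⟩
    exact ⟨-a, d, h1, h2, by rw [map_neg, neg_div]⟩

lemma poly_mem (ζ : ℂ) (f : ℚ[X]) : algebraMap ℚ[X] (RatFunc ℚ) f ∈ regS ζ :=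
  ⟨f, 1, by simp, by simp, by simp⟩

lemma poly_inv_mem (ζ : ℂ) (f : ℚ[X]) (h1 : aeval ζ f ≠ 0) (h2 : aeval (-ζ) f ≠ 0) :
    (algebraMap ℚ[X] (RatFunc ℚ) f)⁻¹ ∈ regS ζ :=
  ⟨1, f, h1, h2, by simp⟩

lemma X_mem (ζ : ℂ) : (RatFunc.X : RatFunc ℚ) ∈ regS ζ := by
  rw [← RatFunc.algebraMap_X]; exact poly_mem ζ _

lemma Xinv_mem (ζ : ℂ) (h : ζ ≠ 0) : (RatFunc.X : RatFunc ℚ)⁻¹ ∈ regS ζ := by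
  rw [← RatFunc.algebraMap_X]; exact poly_inv_mem ζ _ (by simpa) (by simpa)

lemma zpow_X_mem (ζ : ℂ) (h : ζ ≠ 0) (m : ℤ) : (RatFunc.X : RatFunc ℚ) ^ m ∈ regS ζ := by
  obtain ⟨k, rfl | rfl⟩ := m.eq_nat_or_neg
  · rw [zpow_natCast]; exact Subring.pow_mem _ (X_mem ζ) _
  · rw [zpow_neg, zpow_natCast, ← inv_pow]; exact Subring.pow_mem _ (Xinv_mem ζ h) _

lemma inv_mem_aux (ζ : ℂ) (h : ζ ≠ 0) (c : ℚ) (m : ℤ) (h1 : 1 + (c : ℂ) * ζ ^ m ≠ 0)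
    (h2 : 1 + (c : ℂ) * (-ζ) ^ m ≠ 0) :
    (1 + algebraMap ℚ[X] (RatFunc ℚ) (Polynomial.C c) * (RatFunc.X : RatFunc ℚ) ^ m)⁻¹ ∈ regS ζ := by
  have hX : (RatFunc.X : RatFunc ℚ) ≠ 0 := RatFunc.X_ne_zero
  obtain ⟨k, rfl | rfl⟩ := m.eq_nat_or_neg
  · have := poly_inv_mem ζ (1 + Polynomial.C c * X ^ k) (by simpa using h1) (by simpa using h2)
    simpa using this
  · have hk : ζ ^ k ≠ 0 := pow_ne_zero _ h
    have hk' : (-ζ) ^ k ≠ 0 := pow_ne_zero _ (by simpa)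
    have := poly_inv_mem ζ (X ^ k + Polynomial.C c)
      (by
        intro h0; apply h1
        simp only [map_add, map_pow, aeval_X, aeval_C] at h0
        rw [zpow_neg, zpow_natCast]
        field_simp
        simpa using h0)
      (by
        intro h0; apply h2
        simp only [map_add, map_pow, aeval_X, aeval_C] at h0
        rw [zpow_neg, zpow_natCast]
        field_simp
        simpa using h0)
    have h3 := (regS ζ).mul_mem ((regS ζ).pow_mem (X_mem ζ) k) this
    convert h3 using 1
    rw [zpow_neg, zpow_natCast, map_add, map_pow, RatFunc.algebraMap_X]
    have : (RatFunc.X : RatFunc ℚ) ^ k ≠ 0 := pow_ne_zero _ hX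
    generalize algebraMap ℚ[X] (RatFunc ℚ) (Polynomial.C c) = y
    generalize (RatFunc.X : RatFunc ℚ) ^ k = x at *
    rw [show 1 + y * x⁻¹ = (x + y) / x by field_simp, inv_div, div_eq_mul_inv]

lemma one_sub_inv_mem (ζ : ℂ) (h : ζ ≠ 0) (m : ℤ) (h1 : ζ ^ m ≠ 1) (h2 : (-ζ) ^ m ≠ 1) :
    (1 - (RatFunc.X : RatFunc ℚ) ^ m)⁻¹ ∈ regS ζ := by
  have := inv_mem_aux ζ h (-1) m (by simpa [← sub_eq_add_neg, sub_eq_zero] using h1.symm)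
    (by simpa [← sub_eq_add_neg, sub_eq_zero] using h2.symm)
  simpa [← sub_eq_add_neg] using this

lemma one_add_inv_mem (ζ : ℂ) (h : ζ ≠ 0) (m : ℤ) (h1 : ζ ^ m ≠ -1) (h2 : (-ζ) ^ m ≠ -1) :
    (1 + (RatFunc.X : RatFunc ℚ) ^ m)⁻¹ ∈ regS ζ := by
  have := inv_mem_aux ζ h 1 m
    (by intro h0; apply h1; push_cast at h0; linear_combination h0)
    (by intro h0; apply h2; push_cast at h0; linear_combination h0)
  simpa using this

lemma X_pow_ne_const (k : ℕ) (hk : k ≠ 0) (c : ℚ) :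
    (RatFunc.X : RatFunc ℚ) ^ k ≠ algebraMap ℚ[X] (RatFunc ℚ) (Polynomial.C c) := by
  rw [← RatFunc.algebraMap_X, ← map_pow]
  intro h
  have h2 := RatFunc.algebraMap_injective ℚ h
  have h3 := congrArg Polynomial.natDegree h2
  simp at h3
  exact hk h3

lemma X_zpow_ne_one (m : ℤ) (hm : m ≠ 0) : (RatFunc.X : RatFunc ℚ) ^ m ≠ 1 := by
  obtain ⟨k, rfl | rfl⟩ := m.eq_nat_or_neg
  · rw [zpow_natCast]
    simpa using X_pow_ne_const k (by simpa using hm) 1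
  · rw [zpow_neg, zpow_natCast, Ne, inv_eq_one]
    simpa using X_pow_ne_const k (by simpa using hm) 1

lemma X_zpow_ne_neg_one (m : ℤ) (hm : m ≠ 0) : (RatFunc.X : RatFunc ℚ) ^ m ≠ -1 := by
  intro h
  apply X_zpow_ne_one (m + m) (by omega)
  rw [zpow_add₀ RatFunc.X_ne_zero, h]; ring

lemma coprime_cyc (n : ℕ) (hn : 0 < n) (ζ : ℂ) (hζ : IsPrimitiveRoot ζ n) (d : ℚ[X])
    (h1 : aeval ζ d ≠ 0) : IsCoprime (cyclotomic n ℚ) d := by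
  rw [(cyclotomic.irreducible_rat hn).coprime_iff_not_dvd]
  rintro ⟨e, rfl⟩
  apply h1
  have : aeval ζ (cyclotomic n ℚ) = 0 := by
    have := hζ.isRoot_cyclotomic hn
    rw [aeval_def, eval₂_eq_eval_map, map_cyclotomic]
    exact this
  simp [this]

lemma coprime_cyc_neg (n : ℕ) (hn : 0 < n) (ζ : ℂ) (hζ : IsPrimitiveRoot ζ n) (d : ℚ[X])
    (h1 : aeval (-ζ) d ≠ 0) : IsCoprime ((cyclotomic n ℚ).comp (-X)) d := by
  have h := coprime_cyc n hn ζ hζ (d.comp (-X)) (by rw [aeval_comp]; simpa using h1)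
  have h2 := h.map (Polynomial.compRingHom (-X : ℚ[X]))
  simp only [Polynomial.coe_compRingHom_apply] at h2
  rwa [Polynomial.comp_assoc d, show (-X : ℚ[X]).comp (-X) = X by simp, Polynomial.comp_X] at h2

lemma dvd_num (n : ℕ) (hn : 0 < n) (hodd : Odd n) (ζ : ℂ) (hζ : IsPrimitiveRoot ζ n)
    (x y : RatFunc ℚ) (hy : y ∈ regS ζ)
    (hx : x = (1 + (RatFunc.X : RatFunc ℚ) ^ n) ^ 3 * (1 - (RatFunc.X : RatFunc ℚ) ^ n) ^ 2 * y) :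
    ((cyclotomic n ℚ).comp (-X)) ^ 3 * (cyclotomic n ℚ) ^ 2 ∣ RatFunc.num x := by
  obtain ⟨a, d, h1, h2, rfl⟩ := hy
  have hd : d ≠ 0 := by rintro rfl; simp at h1
  have hx2 : x = algebraMap ℚ[X] (RatFunc ℚ) ((1 + X ^ n) ^ 3 * (1 - X ^ n) ^ 2 * a) /
      algebraMap ℚ[X] (RatFunc ℚ) d := by
    rw [hx]; simp only [map_mul, map_pow, map_add, map_sub, map_one, RatFunc.algebraMap_X]; ring
  have h3 := (RatFunc.num_mul_eq_mul_denom_iff hd).2 hx2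
  have c1 := coprime_cyc n hn ζ hζ d h1
  have c2 := coprime_cyc_neg n hn ζ hζ d h2
  have hc : IsCoprime (((cyclotomic n ℚ).comp (-X)) ^ 3 * (cyclotomic n ℚ) ^ 2) d :=
    IsCoprime.mul_left c2.pow_left c1.pow_left
  apply hc.dvd_of_dvd_mul_right
  rw [h3]
  have d1 : cyclotomic n ℚ ∣ 1 - X ^ n := by
    have := cyclotomic.dvd_X_pow_sub_one n ℚ
    rw [← neg_sub]; exact this.neg_right
  have d2 : (cyclotomic n ℚ).comp (-X) ∣ 1 + X ^ n := by
    have := map_dvd (Polynomial.compRingHom (-X : ℚ[X])) d1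
    simp only [Polynomial.coe_compRingHom_apply] at this
    simpa [hodd.neg_pow] using this
  exact Dvd.dvd.mul_right (Dvd.dvd.mul_right (mul_dvd_mul (pow_dvd_pow_of_dvd d2 3)
    (pow_dvd_pow_of_dvd d1 2)) _) _

lemma qp_split {R : Type*} [CommRing R] (p b : R) (k : ℕ) :
    qp (p * b) p (2 * k) = qp (p * b) (p ^ 2) k * qp (p ^ 2 * b) (p ^ 2) k := by
  induction k with
  | zero => simp [qp]
  | succ k ih =>
    rw [show 2 * (k + 1) = 2 * k + 1 + 1 by ring, qp_succ, qp_succ, ih, qp_succ, qp_succ]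
    ring

end final

section assembly

/-- The frozen expression, rewritten in terms of `p = X ^ 4` and `b = X ^ s`. -/
lemma bridge (N : ℕ) (s : ℤ) (n : ℤ) (hn : n = 4 * N + s) (x p b : RatFunc ℚ) (hx : x ≠ 0)
    (hx2 : 1 - x ^ (2 : ℤ) ≠ 0) (hp : p = x ^ (4 : ℤ)) (hb : b = x ^ s) :
    ((∑ k ∈ Finset.range (N + 1),
            (-1 : RatFunc ℚ) ^ k *
              ((1 + x ^ (8 * (k : ℤ) + s)) *
                qp (x ^ (2 * s)) (x ^ (8 : ℤ)) k ^ 3) /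
              ((1 + x ^ s) *
                qp (x ^ (8 : ℤ)) (x ^ (8 : ℤ)) k ^ 3) *
              x ^ (4 * (k : ℤ) ^ 2 + 2 * (k : ℤ) * (4 - s))) -
          (-1 : RatFunc ℚ) ^ N *
            (((1 - (x ^ (2 : ℤ)) ^ n) / (1 - x ^ (2 : ℤ))) /
              ((1 - (x ^ (2 : ℤ)) ^ s) / (1 - x ^ (2 : ℤ)))) *
            x ^ ((n - s) * (n + s - 4) / 4) *
            ∑ k ∈ Finset.range (N + 1),
              qp (x ^ (2 * s)) (x ^ (8 : ℤ)) k ^ 2 *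
                qp (x ^ (4 : ℤ)) (x ^ (8 : ℤ)) k /
                (qp (x ^ (8 : ℤ)) (x ^ (8 : ℤ)) k *
                  qp (x ^ (4 + s)) (x ^ (8 : ℤ)) k *
                  qp (x ^ (8 + s)) (x ^ (8 : ℤ)) k) *
                x ^ (2 * (k : ℤ) * (4 - s)))
    = (∑ k ∈ range (N+1), alp p b k * (p^2/b^2)^k * (qp (b^2) (p^2) k^2 / qp (p^2) (p^2) k^2)) - (-1)^N * (1-(p^N*b)^2)/(1-b^2) * (∏ j ∈ range N, (b^2*p^(2*j))) * (∑ k ∈ range (N+1), bet p b k * (p^2/b^2)^k * qp (b^2) (p^2) k^2) := by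
  have hp0 : p ≠ 0 := by rw [hp]; exact zpow_ne_zero _ hx
  have e1 : x ^ (2 * s) = b ^ 2 := by
    rw [hb, ← zpow_natCast, ← zpow_mul]; congr 1; push_cast; ring
  have e2 : x ^ (8 : ℤ) = p ^ 2 := by
    rw [hp, ← zpow_natCast, ← zpow_mul]; norm_num
  have e3 : x ^ (4 + s) = p * b := by rw [hp, hb, zpow_add₀ hx]
  have e4 : x ^ (8 + s) = p ^ 2 * b := by rw [zpow_add₀ hx, e2, hb]
  have e5 : ∀ k : ℕ, x ^ (8 * (k : ℤ) + s) = p ^ (2 * k) * b := by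
    intro k
    rw [zpow_add₀ hx, zpow_mul, e2, zpow_natCast, ← pow_mul, hb]
  have e6 : ∀ k : ℕ, x ^ (2 * (k : ℤ) * (4 - s)) = (p ^ 2 / b ^ 2) ^ k := by
    intro k
    rw [← e1, ← e2, ← zpow_sub₀ hx, ← zpow_natCast, ← zpow_mul]; congr 1; ring
  have e7 : ∀ k : ℕ, x ^ (4 * (k : ℤ) ^ 2 + 2 * (k : ℤ) * (4 - s))
      = p ^ (k ^ 2) * (p ^ 2 / b ^ 2) ^ k := by
    intro k
    rw [zpow_add₀ hx, e6, zpow_mul, ← hp]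
    congr 1
  have e8 : (x ^ (2 : ℤ)) ^ n = (p ^ N * b) ^ 2 := by
    rw [hp, hb, hn, ← zpow_natCast, ← zpow_natCast, ← zpow_mul, ← zpow_mul, ← zpow_add₀ hx,
      ← zpow_mul]; congr 1; push_cast; ring
  have e9 : (x ^ (2 : ℤ)) ^ s = b ^ 2 := by rw [← zpow_mul, e1]
  have e10 : x ^ ((n - s) * (n + s - 4) / 4) = ∏ j ∈ range N, (b ^ 2 * p ^ (2 * j)) := by
    have h := prod_scal p b N
    apply mul_right_cancel₀ (pow_ne_zero N hp0)
    rw [h, show (n - s) * (n + s - 4) = 4 * (N * (4 * N + 2 * s - 4)) by rw [hn]; ring,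
      Int.mul_ediv_cancel_left _ (by norm_num), hp, hb]
    simp only [← zpow_natCast, ← zpow_mul]
    rw [← zpow_add₀ hx, ← zpow_add₀ hx]
    congr 1; push_cast; ring
  rw [div_div_div_cancel_right₀ hx2, e8, e9, e10]
  congr 1
  · refine Finset.sum_congr rfl fun k _ => ?_
    rw [e7, e5, e1, e2, ← hb, alp]
    simp only [div_eq_mul_inv, mul_inv]
    ring
  · rw [mul_div_assoc]
    congr 1
    refine Finset.sum_congr rfl fun k _ => ?_
    rw [e6, e1, e2, e3, e4, bet, qp_split, ← hp]
    ring

lemma zeta_ne_one (n : ℕ) (ζ : ℂ) (hζ : IsPrimitiveRoot ζ n) (m : ℤ) (h : ¬ (n : ℤ) ∣ m) :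
    ζ ^ m ≠ 1 := fun h1 => h ((hζ.zpow_eq_one_iff_dvd m).1 h1)

lemma zeta_ne_neg_one (n : ℕ) (hodd : Odd n) (ζ : ℂ) (hζ : IsPrimitiveRoot ζ n) (m : ℤ) :
    ζ ^ m ≠ -1 := by
  intro h
  have h2 : (ζ ^ m) ^ n = 1 := by
    rw [← zpow_natCast, ← zpow_mul, mul_comm, zpow_mul, zpow_natCast, hζ.pow_eq_one, one_zpow]
  rw [h, hodd.neg_one_pow] at h2
  norm_num at h2

lemma final_case (n N : ℕ) (s : ℤ) (hs : s = 1 ∨ s = -1) (hn : (n : ℤ) = 4 * N + s)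
    (hN : 1 ≤ N) (ζ : ℂ) (hζ : IsPrimitiveRoot ζ n) (p b : RatFunc ℚ)
    (hp : p = RatFunc.X ^ (4 : ℤ)) (hb : b = RatFunc.X ^ s) :
    ∃ y ∈ regS ζ, (∑ k ∈ range (N+1), alp p b k * (p^2/b^2)^k * (qp (b^2) (p^2) k^2 / qp (p^2) (p^2) k^2)) - (-1)^N * (1-(p^N*b)^2)/(1-b^2) * (∏ j ∈ range N, (b^2*p^(2*j))) * (∑ k ∈ range (N+1), bet p b k * (p^2/b^2)^k * qp (b^2) (p^2) k^2) = (1+RatFunc.X^n)^3*(1-RatFunc.X^n)^2*y := by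
  have hX : (RatFunc.X : RatFunc ℚ) ≠ 0 := RatFunc.X_ne_zero
  have hodd : Odd n := by
    rw [Nat.odd_iff]; omega
  have hn3 : 3 ≤ n := by omega
  have hζ0 : ζ ≠ 0 := hζ.ne_zero (by omega)
  have hsodd : Odd s := by rcases hs with rfl | rfl <;> decide
  have hpb : p ^ N * b = RatFunc.X ^ n := by
    rw [hp, hb, ← zpow_natCast, ← zpow_natCast, ← zpow_mul, ← zpow_add₀ hX, hn]
  have hpow : ∀ i : ℕ, p ^ i = RatFunc.X ^ (4 * (i : ℤ)) := by
    intro i; rw [hp, ← zpow_natCast, ← zpow_mul]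
  have hpjb : ∀ j : ℕ, p ^ j * b = RatFunc.X ^ (4 * (j : ℤ) + s) := by
    intro j; rw [hpow, hb, ← zpow_add₀ hX]
  have hb2p : ∀ i : ℕ, b ^ 2 * p ^ (2 * i) = RatFunc.X ^ (2 * s + 8 * (i : ℤ)) := by
    intro i; rw [hpow, hb, ← zpow_natCast, ← zpow_mul, ← zpow_add₀ hX]
    congr 1; push_cast; ring
  have hns : ¬ (n : ℤ) ∣ s := by
    intro h
    have : (n : ℤ) ∣ 1 := by
      rcases hs with rfl | rfl
      · exact h
      · simpa using h
    have := Int.le_of_dvd (by norm_num) this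
    omega
  rw [← hpb]
  apply mainS (regS ζ) p b N hN
  · rw [hp]; exact zpow_ne_zero _ hX
  · rw [hb]; exact zpow_ne_zero _ hX
  · intro i hi
    rw [hpow, sub_ne_zero]
    exact (X_zpow_ne_one _ (by omega)).symm
  · intro i
    rw [hb2p, sub_ne_zero]
    exact (X_zpow_ne_one _ (by omega)).symm
  · intro i
    rw [hpjb, sub_ne_zero]
    exact (X_zpow_ne_one _ (by omega)).symm
  · intro h
    exact X_zpow_ne_neg_one s (by omega) (by rw [← hb]; linear_combination h)
  · rw [hp]; exact zpow_X_mem ζ hζ0 _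
  · rw [hp, ← zpow_neg]; exact zpow_X_mem ζ hζ0 _
  · rw [hb]; exact zpow_X_mem ζ hζ0 _
  · rw [hb, ← zpow_neg]; exact zpow_X_mem ζ hζ0 _
  · intro i h1 h2
    have hnd : ¬ (n : ℤ) ∣ 4 * ((2 * i : ℕ) : ℤ) := by
      intro h
      have h3 : n ∣ 8 * i := by
        have : (n : ℤ) ∣ ((8 * i : ℕ) : ℤ) := by
          convert h using 1; push_cast; ring
        exact_mod_cast this
      have hc : Nat.Coprime n 8 := by
        have : Nat.Coprime n 2 := (Nat.coprime_two_right).2 hodd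
        exact this.pow_right 3
      have := Nat.le_of_dvd (by omega) (hc.dvd_of_dvd_mul_left h3)
      omega
    rw [hpow]
    have hz := zeta_ne_one n ζ hζ _ hnd
    refine one_sub_inv_mem ζ hζ0 _ hz ?_
    rw [Even.neg_zpow (by push_cast; exact ⟨4 * i, by ring⟩)]
    exact hz
  · intro j h1 h2 h3
    rw [hpjb]
    have hnd : ¬ (n : ℤ) ∣ 4 * (j : ℤ) + s := by
      rintro ⟨t, ht⟩
      have hpos : 0 < (n : ℤ) := by omega
      have ht0 : 0 < t := by
        by_contra hcon
        nlinarith [show 0 < 4 * (j : ℤ) + s by omega]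
      have ht2 : t < 3 := by
        by_contra hcon
        nlinarith [show 4 * (j : ℤ) + s < 3 * n by omega]
      interval_cases t <;> omega
    refine one_sub_inv_mem ζ hζ0 _ (zeta_ne_one n ζ hζ _ hnd) ?_
    have ho : Odd (4 * (j : ℤ) + s) := by
      rw [Int.odd_iff]; omega
    rw [ho.neg_zpow]
    intro h
    exact zeta_ne_neg_one n hodd ζ hζ _ (by rw [← h, neg_neg])
  · rw [hb]
    refine one_add_inv_mem ζ hζ0 _ (zeta_ne_neg_one n hodd ζ hζ _) ?_
    rw [hsodd.neg_zpow]
    intro h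
    exact zeta_ne_one n ζ hζ _ hns (neg_injective h)
  · rw [hb]
    refine one_sub_inv_mem ζ hζ0 _ (zeta_ne_one n ζ hζ _ hns) ?_
    rw [hsodd.neg_zpow]
    intro h
    exact zeta_ne_neg_one n hodd ζ hζ _ (by rw [← h, neg_neg])

end assembly

theorem stmt1 (n : ℕ) (s : ℤ) (hpos : 0 < n)
    (hs : s = 1 ∨ s = -1) (hns : (n : ℤ) ≡ s [ZMOD (4 : ℤ)]) :
    ((cyclotomic n ℚ).comp (-X)) ^ 3 * (cyclotomic n ℚ) ^ 2 ∣
      RatFunc.num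
        ((∑ k ∈ Finset.range ((((n : ℤ) - s) / 4).toNat + 1),
            (-1 : RatFunc ℚ) ^ k *
              ((1 + RatFunc.X ^ (8 * (k : ℤ) + s)) *
                qPoch (RatFunc.X ^ (2 * s)) (RatFunc.X ^ (8 : ℤ)) k ^ 3) /
              ((1 + RatFunc.X ^ s) *
                qPoch (RatFunc.X ^ (8 : ℤ)) (RatFunc.X ^ (8 : ℤ)) k ^ 3) *
              RatFunc.X ^ (4 * (k : ℤ) ^ 2 + 2 * (k : ℤ) * (4 - s))) -
          (-1 : RatFunc ℚ) ^ (((n : ℤ) - s) / 4).toNat *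
            (qInt (RatFunc.X ^ (2 : ℤ)) (n : ℤ) / qInt (RatFunc.X ^ (2 : ℤ)) s) *
            RatFunc.X ^ (((n : ℤ) - s) * ((n : ℤ) + s - 4) / 4) *
            ∑ k ∈ Finset.range ((((n : ℤ) - s) / 4).toNat + 1),
              qPoch (RatFunc.X ^ (2 * s)) (RatFunc.X ^ (8 : ℤ)) k ^ 2 *
                qPoch (RatFunc.X ^ (4 : ℤ)) (RatFunc.X ^ (8 : ℤ)) k /
                (qPoch (RatFunc.X ^ (8 : ℤ)) (RatFunc.X ^ (8 : ℤ)) k *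
                  qPoch (RatFunc.X ^ (4 + s)) (RatFunc.X ^ (8 : ℤ)) k *
                  qPoch (RatFunc.X ^ (8 + s)) (RatFunc.X ^ (8 : ℤ)) k) *
                RatFunc.X ^ (2 * (k : ℤ) * (4 - s))) := by
  have hmod : ((n : ℤ) - s) % 4 = 0 := Int.emod_eq_zero_of_dvd hns.symm.dvd
  obtain ⟨N, hN⟩ : ∃ N : ℕ, N = (((n : ℤ) - s) / 4).toNat := ⟨_, rfl⟩
  have hn : (n : ℤ) = 4 * N + s := by omega
  rw [← hN]
  have hX : (RatFunc.X : RatFunc ℚ) ≠ 0 := RatFunc.X_ne_zero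
  have hx2 : 1 - (RatFunc.X : RatFunc ℚ) ^ (2 : ℤ) ≠ 0 := by
    rw [sub_ne_zero]; exact (X_zpow_ne_one _ (by norm_num)).symm
  rcases Nat.eq_zero_or_pos N with h0 | hN1
  · have hs1 : s = 1 := by omega
    have hn1 : n = 1 := by omega
    subst hs1 hn1 h0
    have h1 : (1 + RatFunc.X : RatFunc ℚ) ≠ 0 := by
      intro h
      exact X_zpow_ne_neg_one 1 (by norm_num) (by rw [zpow_one]; linear_combination h)
    have h3 : qInt (RatFunc.X ^ (2 : ℤ)) 1 ≠ 0 := by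
      simp only [qInt, zpow_one]
      exact div_ne_zero hx2 hx2
    convert dvd_zero _
    simp [qPoch, h1]
    rw [zpow_ofNat] at h3
    rw [div_self h3, sub_self]
  · have hodd : Odd n := by
      rw [Nat.odd_iff]; omega
    have hζ := Complex.isPrimitiveRoot_exp n (by omega)
    obtain ⟨y, hy, hxy⟩ := final_case n N s hs hn hN1 _ hζ _ _ rfl rfl
    refine dvd_num n hpos hodd _ hζ _ y hy ?_
    rw [← hxy, ← bridge N s n hn RatFunc.X _ _ hX hx2 rfl rfl]
    rfl
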